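/- arXiv:1105.2735 — 2 statements merged into one kernel-verified Lean document; each statement's English description precedes it below -/
import Mathlib

section
/- Let d ∈ {3, 4, 5, …}, ν ∈ ℂ with −ν/2 ∉ −ℕ₀, and x, x' ∈ ℝ^d with r := ‖x‖ > 0, r' := ‖x'‖ > 0, r ≠ r', and cos γ := (x, x')/(r r'). Then ‖x − x'‖^ν = ( e^{iπ(ν+d−1)/2} Γ((d−2)/2) ) / ( 2√π Γ(−ν/2) ) · ( (r_>² − r_<²)^{(ν+d−1)/2} / (r r')^{(d−1)/2} ) · Σ_{n=0}^∞ (2n + d − 2) Q_{n+(d−3)/2}^{(1−ν−d)/2}((r² + r'²)/(2rr')) C_n^{d/2−1}(cos γ), where r_< := min{r, r'} and r_> := max{r, r'}. -/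
open Complex

/-- Pochhammer symbol (rising factorial) `(a)_k = a (a+1) ⋯ (a+k-1)`. -/
noncomputable def poch (a : ℂ) (k : ℕ) : ℂ := ∏ i ∈ Finset.range k, (a + (i : ℂ))

/-- Gauss hypergeometric function `₂F₁(a,b;c;w)` as a series. -/
noncomputable def hyp2F1 (a b c w : ℂ) : ℂ :=
  ∑' k : ℕ, poch a k * poch b k / (poch c k * (Nat.factorial k : ℂ)) * w ^ k

/-- Terminating generalized hypergeometric function `₃F₂(-m,a₂,a₃;b₁,b₂;1)`. -/
noncomputable def hyp3F2 (m : ℕ) (a2 a3 b1 b2 : ℂ) : ℂ :=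
  ∑ j ∈ Finset.range (m + 1),
    poch (-(m : ℂ)) j * poch a2 j * poch a3 j /
      (poch b1 j * poch b2 j * (Nat.factorial j : ℂ))

/-- Gegenbauer polynomial `C_n^μ(x)`. -/
noncomputable def gegenbauerC (n : ℕ) (μ : ℂ) (x : ℂ) : ℂ :=
  poch (2 * μ) n / (Nat.factorial n : ℂ) *
    ∑ j ∈ Finset.range (n + 1),
      poch (-(n : ℂ)) j * poch ((n : ℂ) + 2 * μ) j /
          (poch (μ + 1 / 2) j * (Nat.factorial j : ℂ)) * ((1 - x) / 2) ^ j

/-- Associated Legendre function of the second kind `Q_ν^μ(z)` (principal branches). -/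
noncomputable def legendreQ (ν μ z : ℂ) : ℂ :=
  (Real.sqrt Real.pi : ℂ) * Complex.exp (Real.pi * I * μ) * Complex.Gamma (ν + μ + 1) *
      (z ^ 2 - 1) ^ (μ / 2) /
      ((2 : ℂ) ^ (ν + 1) * Complex.Gamma (ν + 3 / 2) * z ^ (ν + μ + 1)) *
    hyp2F1 ((ν + μ + 2) / 2) ((ν + μ + 1) / 2) (ν + 3 / 2) (1 / z ^ 2)

/-- Legendre polynomial `P_n(x)`. -/
noncomputable def legendrePoly (n : ℕ) (x : ℂ) : ℂ :=
  ∑ j ∈ Finset.range (n + 1),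
    poch (-(n : ℂ)) j * poch ((n : ℂ) + 1) j / (poch 1 j * (Nat.factorial j : ℂ)) *
      ((1 - x) / 2) ^ j

/-- Chebyshev polynomial of the second kind `U_n(x)`. -/
noncomputable def chebyshevU (n : ℕ) (x : ℂ) : ℂ :=
  ((n : ℂ) + 1) *
    ∑ j ∈ Finset.range (n + 1),
      poch (-(n : ℂ)) j * poch ((n : ℂ) + 2) j / (poch (3 / 2) j * (Nat.factorial j : ℂ)) *
        ((1 - x) / 2) ^ j

open scoped RealInnerProductSpace

theorem poch_succ (a : ℂ) (k : ℕ) : poch a (k + 1) = poch a k * (a + k) := by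
  simp [poch, Finset.prod_range_succ]

theorem poch_zero (a : ℂ) : poch a 0 = 1 := by simp [poch]

theorem poch_succ' (a : ℂ) (k : ℕ) : poch a (k + 1) = a * poch (a + 1) k := by
  simp only [poch, Finset.prod_range_succ']
  rw [mul_comm]
  congr 1
  · simp
  · apply Finset.prod_congr rfl
    intro i _
    push_cast
    ring

theorem poch_add (a : ℂ) (n k : ℕ) : poch a (n + k) = poch a n * poch (a + n) k := by
  induction k with
  | zero => simp [poch_zero]
  | succ k ih =>
    rw [← add_assoc, poch_succ, ih, poch_succ]
    push_cast
    ring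

theorem poch_dup (a : ℂ) (k : ℕ) :
    poch ((a + 1) / 2) k * poch (a / 2) k = poch a (2 * k) / 4 ^ k := by
  induction k with
  | zero => simp [poch_zero]
  | succ k ih =>
    rw [show 2 * (k + 1) = 2 * k + 1 + 1 by ring, poch_succ, poch_succ, poch_succ, poch_succ]
    have : poch a (2 * k) = 4 ^ k * (poch ((a + 1) / 2) k * poch (a / 2) k) := by
      rw [ih]; field_simp
    rw [this]
    push_cast
    field_simp
    ring

theorem poch_ne_zero (a : ℂ) (ha : ∀ m : ℕ, a ≠ -(m : ℂ)) (k : ℕ) : poch a k ≠ 0 := by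
  simp only [poch]
  rw [Finset.prod_ne_zero_iff]
  intro i _ h
  exact ha i (eq_neg_of_add_eq_zero_left h)

theorem real_ne_neg (l : ℝ) (hl : 0 < l) (m : ℕ) : (l : ℂ) ≠ -(m : ℂ) := by
  intro h
  have : l = -(m : ℝ) := by exact_mod_cast h
  have h2 : (0 : ℝ) ≤ m := Nat.cast_nonneg m
  linarith

theorem poch_real_ne (l : ℝ) (hl : 0 < l) (k : ℕ) : poch (l : ℂ) k ≠ 0 :=
  poch_ne_zero _ (real_ne_neg l hl) k

theorem poch_real (l : ℝ) (hl : 0 < l) (k : ℕ) : ∃ r : ℝ, 0 < r ∧ poch (l : ℂ) k = r := by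
  refine ⟨∏ i ∈ Finset.range k, (l + i), ?_, ?_⟩
  · apply Finset.prod_pos
    intro i _
    positivity
  · simp [poch]

theorem Gamma_add_nat (a : ℂ) (ha : ∀ m : ℕ, a ≠ -(m : ℂ)) (n : ℕ) :
    Complex.Gamma (n + a) = poch a n * Complex.Gamma a := by
  induction n with
  | zero => simp [poch_zero]
  | succ n ih =>
    rw [show ((n + 1 : ℕ) : ℂ) + a = (n + a) + 1 by push_cast; ring, Complex.Gamma_add_one, ih,
      poch_succ]
    · ring
    · intro h
      exact ha n (by rw [← add_right_inj (n : ℂ), h]; ring)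

/-- Coefficients. -/
noncomputable def gco (l : ℂ) (n j : ℕ) : ℂ :=
  poch (2 * l) (n + j) * poch (-(n : ℂ)) j /
    ((Nat.factorial n : ℂ) * (poch (l + 1 / 2) j * (Nat.factorial j : ℂ)))

theorem poch_neg_nat_zero (n j : ℕ) (h : n < j) : poch (-(n : ℂ)) j = 0 := by
  simp only [poch]
  apply Finset.prod_eq_zero (Finset.mem_range.2 h)
  simp

theorem gegen_eq (l x : ℂ) (n N : ℕ) (h : n < N) :
    gegenbauerC n l x = ∑ j ∈ Finset.range N, gco l n j * ((1 - x) / 2) ^ j := by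
  have h1 : ∑ j ∈ Finset.range N, gco l n j * ((1 - x) / 2) ^ j
      = ∑ j ∈ Finset.range (n + 1), gco l n j * ((1 - x) / 2) ^ j := by
    symm
    apply Finset.sum_subset
    · intro i hi
      simp only [Finset.mem_range] at *
      omega
    · intro i _ hi
      simp only [Finset.mem_range, not_lt] at hi
      simp [gco, poch_neg_nat_zero n i (by omega)]
  rw [h1, gegenbauerC, Finset.mul_sum]
  apply Finset.sum_congr rfl
  intro j _
  rw [gco, poch_add, show 2 * l + (n : ℂ) = n + 2 * l by ring]
  field_simp

theorem gco_rec_zero (l : ℂ) (n : ℕ) :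
    (n + 2) * gco l (n + 2) 0 + (n + 2 * l) * gco l n 0 =
      2 * (n + 1 + l) * gco l (n + 1) 0 := by
  have h0 : (n.factorial : ℂ) ≠ 0 := by exact_mod_cast Nat.factorial_ne_zero n
  have h1 : (n : ℂ) + 1 ≠ 0 := by exact_mod_cast Nat.succ_ne_zero n
  have h2 : (n : ℂ) + 1 + 1 ≠ 0 := by exact_mod_cast Nat.succ_ne_zero (n + 1)
  simp only [gco, poch_zero, poch_succ, Nat.factorial_succ, add_zero]
  push_cast
  field_simp
  ring

theorem gco_rec (l : ℂ) (hl : ∀ j : ℕ, l + 1 / 2 ≠ -(j : ℂ)) (n j : ℕ) :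
    (n + 2) * gco l (n + 2) (j + 1) + (n + 2 * l) * gco l n (j + 1) =
      2 * (n + 1 + l) * (gco l (n + 1) (j + 1) - 2 * gco l (n + 1) j) := by
  have h0 : (n.factorial : ℂ) ≠ 0 := by exact_mod_cast Nat.factorial_ne_zero n
  have h0' : (j.factorial : ℂ) ≠ 0 := by exact_mod_cast Nat.factorial_ne_zero j
  have h1 : (n : ℂ) + 1 ≠ 0 := by exact_mod_cast Nat.succ_ne_zero n
  have h1' : (j : ℂ) + 1 ≠ 0 := by exact_mod_cast Nat.succ_ne_zero j
  have h2 : (n : ℂ) + 1 + 1 ≠ 0 := by exact_mod_cast Nat.succ_ne_zero (n + 1)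
  have hp : poch (l + 1 / 2) j ≠ 0 := poch_ne_zero _ hl j
  have hq : l + 1 / 2 + j ≠ 0 := fun h => hl j (eq_neg_of_add_eq_zero_left h)
  have e1 : poch (-((n + 2 : ℕ) : ℂ)) (j + 1) = -(n + 2) * poch (-((n + 1 : ℕ) : ℂ)) j := by
    rw [poch_succ']
    push_cast
    ring_nf
  have e2 : poch (-((n + 1 : ℕ) : ℂ)) (j + 1) = poch (-((n + 1 : ℕ) : ℂ)) j * (j - (n + 1)) := by
    rw [poch_succ]
    push_cast
    ring_nf
  have e3' : poch (-((n + 1 : ℕ) : ℂ)) (j + 1) = -(n + 1) * poch (-(n : ℂ)) j := by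
    rw [poch_succ']
    push_cast
    ring_nf
  have e3 : poch (-(n : ℂ)) (j + 1) =
      poch (-((n + 1 : ℕ) : ℂ)) j * (n + 1 - j) / (n + 1) * (j - n) := by
    have : poch (-(n : ℂ)) j = poch (-((n + 1 : ℕ) : ℂ)) j * (n + 1 - j) / (n + 1) := by
      rw [eq_div_iff h1]
      linear_combination e3' - e2
    rw [poch_succ, this]
    ring
  simp only [gco, e1, e2, e3]
  rw [show n + 2 + (j + 1) = n + j + 1 + 1 + 1 by ring,
    show n + 1 + (j + 1) = n + j + 1 + 1 by ring, show n + (j + 1) = n + j + 1 by ring,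
    show n + 1 + j = n + j + 1 by ring]
  rw [poch_succ _ (n + j + 1 + 1), poch_succ _ (n + j + 1), poch_succ (l + 1 / 2)]
  generalize poch (2 * l) (n + j + 1) = R
  generalize poch (-((n + 1 : ℕ) : ℂ)) j = P
  generalize poch (l + 1 / 2) j = Q at *
  simp only [Nat.factorial_succ]
  push_cast
  have hq' : 2 * l + 1 + 2 * j ≠ 0 := by
    intro h
    apply hq
    linear_combination h / 2
  have hq'' : l + 1 / 2 + j = (2 * l + 1 + 2 * j) / 2 := by ring
  rw [hq'']
  field_simp
  ring

theorem gegen_rec (l x : ℂ) (hl : ∀ j : ℕ, l + 1 / 2 ≠ -(j : ℂ)) (n : ℕ) :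
    (n + 2) * gegenbauerC (n + 2) l x + (n + 2 * l) * gegenbauerC n l x =
      2 * (n + 1 + l) * x * gegenbauerC (n + 1) l x := by
  rw [gegen_eq l x (n + 2) (n + 4) (by omega), gegen_eq l x n (n + 4) (by omega)]
  have hx : x = 1 - 2 * ((1 - x) / 2) := by ring
  have : 2 * (n + 1 + l) * x * gegenbauerC (n + 1) l x =
      2 * (n + 1 + l) * gegenbauerC (n + 1) l x -
        2 * (n + 1 + l) * 2 * ((1 - x) / 2) * gegenbauerC (n + 1) l x := by ring
  rw [this]
  nth_rw 1 [gegen_eq l x (n + 1) (n + 4) (by omega)]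
  rw [gegen_eq l x (n + 1) (n + 3) (by omega)]
  generalize (1 - x) / 2 = y
  rw [Finset.sum_range_succ' _ (n + 3), Finset.sum_range_succ' _ (n + 3),
    Finset.sum_range_succ' _ (n + 3)]
  have hs : ∀ j : ℕ, (n + 2) * (gco l (n + 2) (j + 1) * y ^ (j + 1))
      + (n + 2 * l) * (gco l n (j + 1) * y ^ (j + 1)) =
      2 * (n + 1 + l) * (gco l (n + 1) (j + 1) * y ^ (j + 1)) -
        2 * (n + 1 + l) * 2 * y * (gco l (n + 1) j * y ^ j) := by
    intro j
    linear_combination y ^ (j + 1) * gco_rec l hl n j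
  have hS := Finset.sum_congr (rfl : Finset.range (n + 3) = Finset.range (n + 3))
    (fun j _ => hs j)
  rw [Finset.sum_add_distrib, Finset.sum_sub_distrib, ← Finset.mul_sum, ← Finset.mul_sum,
    ← Finset.mul_sum, ← Finset.mul_sum] at hS
  linear_combination hS + gco_rec_zero l n

theorem gegen_zero (l x : ℂ) : gegenbauerC 0 l x = 1 := by
  simp [gegenbauerC, poch_zero]

theorem gegen_one (l x : ℂ) (hl : l + 1 / 2 ≠ 0) : gegenbauerC 1 l x = 2 * l * x := by
  have h : 2 * l + 1 ≠ 0 := by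
    intro h
    apply hl
    linear_combination h / 2
  have h2 : l + 1 / 2 = (2 * l + 1) / 2 := by ring
  simp [gegenbauerC, poch, Finset.sum_range_succ]
  rw [show l + 2⁻¹ = (2 * l + 1) / 2 by ring]
  field_simp
  left
  ring

theorem binom_hasSum (a w : ℂ) (hw : ‖w‖ < 1) :
    HasSum (fun m : ℕ => poch a m / (m.factorial : ℂ) * w ^ m) ((1 - w) ^ (-a)) := by
  have h := (Complex.one_add_cpow_hasFPowerSeriesOnBall_zero (a := -a)).hasSum (y := -w)
    (by
      rw [Metric.mem_eball, edist_zero_right, enorm_neg, ← ofReal_norm, ENNReal.ofReal_lt_one]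
      exact hw)
  simp only [binomialSeries_apply, zero_add, List.ofFn_const, List.prod_replicate, smul_eq_mul] at h
  rw [sub_eq_add_neg]
  suffices hfun : ∀ m : ℕ, Ring.choose (-a) m * (-w) ^ m = poch a m / (m.factorial : ℂ) * w ^ m by
    simpa only [hfun] using h
  intro m
  have hd : (descPochhammer ℤ m).smeval (-a) = (-1) ^ m * poch a m := by
    induction m with
    | zero => simp [poch_zero]
    | succ m ih =>
      rw [descPochhammer_succ_right, Polynomial.smeval_mul, ih, poch_succ]
      simp [Polynomial.smeval_natCast]
      ring
  have hf : (m.factorial : ℂ) ≠ 0 := by exact_mod_cast Nat.factorial_ne_zero m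
  have h3 := Ring.descPochhammer_eq_factorial_smul_choose (-a) m
  rw [hd, nsmul_eq_mul] at h3
  have h4 : Ring.choose (-a) m = (-1) ^ m * poch a m / m.factorial := by
    rw [h3]; field_simp
  rw [h4, neg_pow w]
  have : ((-1 : ℂ) ^ m) * (-1) ^ m = 1 := by rw [← mul_pow]; simp
  linear_combination (poch a m / m.factorial * w ^ m) * this

/-- Power series with coefficients `(l)_i / i! u^i`. -/
noncomputable def gA (l u : ℂ) : PowerSeries ℂ :=
  PowerSeries.mk fun i => poch l i / (i.factorial : ℂ) * u ^ i

theorem gA_ode (l u : ℂ) :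
    PowerSeries.derivative ℂ (gA l u) * (1 - PowerSeries.C u * PowerSeries.X) =
      PowerSeries.C (l * u) * gA l u := by
  ext n
  rw [mul_sub, mul_one, map_sub, PowerSeries.coeff_C_mul,
    show PowerSeries.derivative ℂ (gA l u) * (PowerSeries.C u * PowerSeries.X) =
      PowerSeries.C u * (PowerSeries.derivative ℂ (gA l u) * PowerSeries.X) by ring,
    PowerSeries.coeff_C_mul]
  cases n with
  | zero =>
    simp [PowerSeries.coeff_derivative, gA, poch_zero, poch_succ]
  | succ n =>
    rw [PowerSeries.coeff_succ_mul_X]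
    have h0 : (n.factorial : ℂ) ≠ 0 := by exact_mod_cast Nat.factorial_ne_zero n
    have h1 : (n : ℂ) + 1 ≠ 0 := by exact_mod_cast Nat.succ_ne_zero n
    have h2 : (n : ℂ) + 1 + 1 ≠ 0 := by exact_mod_cast Nat.succ_ne_zero (n + 1)
    simp only [PowerSeries.coeff_derivative, gA, PowerSeries.coeff_mk,
      poch_succ, Nat.factorial_succ]
    push_cast
    field_simp
    ring

/-- Coefficients of the generating function. -/
noncomputable def gS (l u v : ℂ) (n : ℕ) : ℂ := PowerSeries.coeff n (gA l u * gA l v)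

theorem gS_eq (l u v : ℂ) (n : ℕ) : gS l u v n = ∑ p ∈ Finset.HasAntidiagonal.antidiagonal n,
    (poch l p.1 / (p.1.factorial : ℂ) * u ^ p.1) * (poch l p.2 / (p.2.factorial : ℂ) * v ^ p.2) := by
  simp [gS, PowerSeries.coeff_mul, gA]

theorem gS_rec (l u v : ℂ) (huv : u * v = 1) (n : ℕ) :
    (n + 2) * gS l u v (n + 2) + (n + 2 * l) * gS l u v n =
      (n + 1 + l) * (u + v) * gS l u v (n + 1) := by
  have h : PowerSeries.derivative ℂ (gA l u * gA l v) *
      (1 - PowerSeries.C (u + v) * PowerSeries.X + PowerSeries.X ^ 2) =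
      PowerSeries.C (l * (u + v)) * (gA l u * gA l v) -
        PowerSeries.C (2 * l) * (gA l u * gA l v * PowerSeries.X) := by
    have hA := gA_ode l u
    have hB := gA_ode l v
    have hc : (PowerSeries.C u * PowerSeries.C v : PowerSeries ℂ) = 1 := by
      rw [← map_mul, huv, map_one]
    rw [Derivation.leibniz]
    simp only [smul_eq_mul, map_add, map_mul, map_ofNat] at *
    linear_combination (1 - PowerSeries.C v * PowerSeries.X) * gA l v * hA +
      (1 - PowerSeries.C u * PowerSeries.X) * gA l u * hB +
      (- PowerSeries.X ^ 2 * (gA l u * PowerSeries.derivative ℂ (gA l v) +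
        gA l v * PowerSeries.derivative ℂ (gA l u)) - 2 * PowerSeries.C l * gA l u * gA l v * PowerSeries.X) * hc
  have h2 := congrArg (PowerSeries.coeff (n + 1)) h
  generalize hG : gA l u * gA l v = G at *
  have hs : ∀ k, PowerSeries.coeff k G = gS l u v k := by
    intro k; rw [gS, hG]
  rw [show PowerSeries.derivative ℂ G *
      (1 - PowerSeries.C (u + v) * PowerSeries.X + PowerSeries.X ^ 2) =
      PowerSeries.derivative ℂ G - PowerSeries.C (u + v) * (PowerSeries.derivative ℂ G * PowerSeries.X)
       + PowerSeries.derivative ℂ G * PowerSeries.X * PowerSeries.X by ring] at h2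
  simp only [map_add, map_sub, PowerSeries.coeff_C_mul, PowerSeries.coeff_succ_mul_X] at h2
  rw [← map_add, PowerSeries.coeff_C_mul] at h2
  have h3 : PowerSeries.coeff n (PowerSeries.derivative ℂ G * PowerSeries.X) = n * gS l u v n := by
    cases n with
    | zero => simp
    | succ n =>
      rw [PowerSeries.coeff_succ_mul_X]
      simp [PowerSeries.coeff_derivative, hs]
      ring
  have h4 : PowerSeries.coeff (n + 1) (PowerSeries.derivative ℂ G * PowerSeries.X) =
      (n + 1) * gS l u v (n + 1) := by
    rw [PowerSeries.coeff_succ_mul_X]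
    simp [PowerSeries.coeff_derivative, hs]
    ring
  rw [h3, h4] at h2
  simp only [PowerSeries.coeff_derivative, hs] at h2
  push_cast at h2
  linear_combination h2

theorem gS_gegen (l u v x : ℂ) (hl : ∀ j : ℕ, l + 1 / 2 ≠ -(j : ℂ)) (huv : u * v = 1)
    (hx : u + v = 2 * x) (n : ℕ) : gegenbauerC n l x = gS l u v n := by
  induction n using Nat.twoStepInduction with
  | zero => simp [gegen_zero, gS_eq, poch_zero]
  | one =>
    rw [gegen_one _ _ (by simpa using hl 0), gS_eq]
    simp [Finset.Nat.antidiagonal_succ, poch_succ, poch_zero]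
    linear_combination (-l) * hx
  | more n h1 h2 =>
    have e1 := gegen_rec l x hl n
    have e2 := gS_rec l u v huv n
    rw [h1, h2] at e1
    have h : (n : ℂ) + 2 ≠ 0 := by exact_mod_cast Nat.succ_ne_zero (n + 1)
    apply mul_left_cancel₀ h
    rw [hx] at e2
    linear_combination e1 - e2

theorem half_ne (l : ℝ) (hl : 0 < l) (j : ℕ) : (l : ℂ) + 1 / 2 ≠ -(j : ℂ) := by
  have := real_ne_neg (l + 1 / 2) (by positivity) j
  push_cast at this
  exact this

theorem gegen_at_one (l : ℝ) (hl : 0 < l) (n : ℕ) :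
    ∃ r : ℝ, 0 ≤ r ∧ gegenbauerC n l 1 = r ∧
      ∀ t : ℝ, |t| ≤ 1 → ‖gegenbauerC n l t‖ ≤ r := by
  choose p hp hpe using poch_real l hl
  refine ⟨∑ q ∈ Finset.HasAntidiagonal.antidiagonal n, (p q.1 / q.1.factorial) * (p q.2 / q.2.factorial),
    ?_, ?_, ?_⟩
  · apply Finset.sum_nonneg
    intro q _
    have := hp q.1
    have := hp q.2
    positivity
  · rw [gS_gegen l 1 1 1 (half_ne l hl) (by norm_num) (by norm_num), gS_eq]
    push_cast
    simp [hpe]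
  · intro t ht
    obtain ⟨h1, h2⟩ := abs_le.1 ht
    have hc : Complex.cos (Real.arccos t) = t := by
      rw [← Complex.ofReal_cos, Real.cos_arccos h1 h2]
    rw [gS_gegen l (Complex.exp (Real.arccos t * I)) (Complex.exp (-Real.arccos t * I)) t
      (half_ne l hl) (by rw [← Complex.exp_add]; simp)
      (by rw [← hc, Complex.two_cos]), gS_eq]
    apply (norm_sum_le _ _).trans
    apply Finset.sum_le_sum
    intro q _
    have e1 : ‖Complex.exp (Real.arccos t * I)‖ = 1 := Complex.norm_exp_ofReal_mul_I _
    have e2 : ‖Complex.exp (-Real.arccos t * I)‖ = 1 := by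
      have := Complex.norm_exp_ofReal_mul_I (-Real.arccos t)
      push_cast at this
      exact this
    rw [hpe, hpe, norm_mul, norm_mul, norm_mul, norm_pow, norm_pow, e1, e2, norm_div, norm_div]
    simp [abs_of_pos (hp _)]

/-- Gegenbauer polynomials extended by zero to negative degrees. -/
noncomputable def gZ (l x : ℂ) : ℤ → ℂ
  | Int.ofNat n => gegenbauerC n l x
  | Int.negSucc _ => 0

theorem gZ_nat (l x : ℂ) (n : ℕ) : gZ l x (n : ℤ) = gegenbauerC n l x := rfl

theorem gZ_neg (l x : ℂ) (n : ℤ) (h : n < 0) : gZ l x n = 0 := by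
  obtain ⟨k, rfl⟩ := Int.eq_negSucc_of_lt_zero h
  rfl

theorem gZ_rec (l x : ℂ) (hl : ∀ j : ℕ, l + 1 / 2 ≠ -(j : ℂ)) (n : ℤ) :
    2 * (n + l) * x * gZ l x n = (n + 1) * gZ l x (n + 1) + (n + 2 * l - 1) * gZ l x (n - 1) := by
  by_cases h : n < 0
  · rw [gZ_neg _ _ _ h, gZ_neg _ _ (n - 1) (by omega)]
    by_cases h1 : n = -1
    · subst h1; simp
    · rw [gZ_neg _ _ (n + 1) (by omega)]; simp
  · obtain ⟨m, rfl⟩ := Int.eq_ofNat_of_zero_le (not_lt.1 h)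
    cases m with
    | zero =>
      rw [gZ_neg _ _ (((0 : ℕ) : ℤ) - 1) (by omega),
        show (((0 : ℕ) : ℤ) + 1) = ((1 : ℕ) : ℤ) by simp, gZ_nat, gZ_nat, gegen_zero,
        gegen_one _ _ (by simpa using hl 0)]
      simp
    | succ m =>
      rw [show (((m + 1 : ℕ) : ℤ) + 1) = ((m + 2 : ℕ) : ℤ) by push_cast; ring,
        show (((m + 1 : ℕ) : ℤ) - 1) = (m : ℤ) by push_cast; ring, gZ_nat, gZ_nat, gZ_nat]
      have := gegen_rec l x hl m
      push_cast
      linear_combination -this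

/-- Connection coefficients times Gegenbauer polynomials. -/
noncomputable def gT (l x : ℂ) (p : ℕ × ℕ) : ℂ :=
  ((p.1 : ℂ) - p.2 + l) / (poch l (p.1 + 1) * (p.2.factorial : ℂ)) * gZ l x ((p.1 : ℤ) - p.2)

theorem connection (l : ℝ) (hl : 0 < l) (x : ℂ) (m : ℕ) :
    ∑ p ∈ Finset.HasAntidiagonal.antidiagonal m, gT l x p = (2 * x) ^ m / (m.factorial : ℂ) := by
  have hl0 : (l : ℂ) ≠ 0 := by exact_mod_cast hl.ne'
  induction m with
  | zero =>
    simp [gT, poch_succ, poch_zero, hl0]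
    exact gegen_zero _ _
  | succ m ih =>
    have hm : (m : ℂ) + 1 ≠ 0 := by exact_mod_cast Nat.succ_ne_zero m
    have hmf : (m.factorial : ℂ) ≠ 0 := by exact_mod_cast Nat.factorial_ne_zero m
    let f1 : ℕ × ℕ → ℂ := fun p => ((p.1 : ℂ) - p.2) * (p.1 + l) /
      (poch l (p.1 + 1) * (p.2.factorial : ℂ)) * gZ l x ((p.1 : ℤ) - p.2)
    let f2 : ℕ × ℕ → ℂ := fun p => ((p.1 : ℂ) - p.2 + 2 * l) * p.2 /
      (poch l (p.1 + 1) * (p.2.factorial : ℂ)) * gZ l x ((p.1 : ℤ) - p.2)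
    have key : ((m : ℂ) + 1) * ∑ p ∈ Finset.HasAntidiagonal.antidiagonal (m + 1), gT l x p =
        ∑ p ∈ Finset.HasAntidiagonal.antidiagonal (m + 1), f1 p + ∑ p ∈ Finset.HasAntidiagonal.antidiagonal (m + 1), f2 p := by
      rw [Finset.mul_sum, ← Finset.sum_add_distrib]
      apply Finset.sum_congr rfl
      intro p hp
      have : (p.1 : ℂ) + p.2 = m + 1 := by exact_mod_cast Finset.HasAntidiagonal.mem_antidiagonal.1 hp
      simp only [gT, f1, f2]
      rw [← this]
      ring
    rw [Finset.Nat.sum_antidiagonal_succ (f := f1), Finset.Nat.sum_antidiagonal_succ' (f := f2)] at key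
    have z1 : f1 (0, m + 1) = 0 := by
      simp only [f1]
      rw [gZ_neg _ _ _ (by push_cast; omega), mul_zero]
    have z2 : f2 (m + 1, 0) = 0 := by simp [f2]
    have key2 : ∑ p ∈ Finset.HasAntidiagonal.antidiagonal m, f1 (p.1 + 1, p.2) +
        ∑ p ∈ Finset.HasAntidiagonal.antidiagonal m, f2 (p.1, p.2 + 1) =
        2 * x * ∑ p ∈ Finset.HasAntidiagonal.antidiagonal m, gT l x p := by
      rw [Finset.mul_sum, ← Finset.sum_add_distrib]
      apply Finset.sum_congr rfl
      intro p _
      have hr := gZ_rec l x (half_ne l hl) ((p.1 : ℤ) - p.2)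
      have hP := poch_real_ne l hl (p.1 + 1)
      have hq : (p.1 : ℂ) + 1 + l ≠ 0 := by
        have : (p.1 : ℝ) + 1 + l ≠ 0 := by positivity
        exact_mod_cast this
      have hf : (p.2.factorial : ℂ) ≠ 0 := by exact_mod_cast Nat.factorial_ne_zero p.2
      have hk : (p.2 : ℂ) + 1 ≠ 0 := by exact_mod_cast Nat.succ_ne_zero p.2
      simp only [f1, f2, gT]
      rw [poch_succ _ (p.1 + 1), Nat.factorial_succ,
        show (((p.1 + 1 : ℕ) : ℤ) - p.2) = (p.1 : ℤ) - p.2 + 1 by push_cast; ring,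
        show ((p.1 : ℤ) - (p.2 + 1 : ℕ)) = (p.1 : ℤ) - p.2 - 1 by push_cast; ring]
      push_cast at hr ⊢
      have hq' : (l : ℂ) + (p.1 + 1) ≠ 0 := by
        rw [add_comm]; exact hq
      generalize gZ l x ((p.1 : ℤ) - p.2 + 1) = A at *
      generalize gZ l x ((p.1 : ℤ) - p.2 - 1) = B at *
      generalize gZ l x ((p.1 : ℤ) - p.2) = C at *
      have s1 : ((p.1 : ℂ) + 1 - p.2) * (p.1 + 1 + l) /
          (poch l (p.1 + 1) * (l + (p.1 + 1)) * (p.2.factorial : ℂ)) =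
          ((p.1 : ℂ) + 1 - p.2) / (poch l (p.1 + 1) * (p.2.factorial : ℂ)) := by
        rw [div_eq_div_iff (by positivity) (by positivity)]
        ring
      have s2 : ((p.1 : ℂ) - (p.2 + 1) + 2 * l) * (p.2 + 1) /
          (poch l (p.1 + 1) * ((p.2 + 1) * (p.2.factorial : ℂ))) =
          ((p.1 : ℂ) - (p.2 + 1) + 2 * l) / (poch l (p.1 + 1) * (p.2.factorial : ℂ)) := by
        rw [div_eq_div_iff (by positivity) (by positivity)]
        ring
      rw [s1, s2]
      linear_combination (-1 / (poch l (p.1 + 1) * (p.2.factorial : ℂ))) * hr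
    rw [z1, z2, zero_add] at key
    rw [eq_div_iff (by exact_mod_cast Nat.factorial_ne_zero _), Nat.factorial_succ]
    rw [ih] at key2
    have key3 : (2 * x) * ((2 * x) ^ m / (m.factorial : ℂ)) * m.factorial = (2 * x) ^ (m + 1) := by
      field_simp
      ring
    push_cast
    linear_combination (m.factorial : ℂ) * (key + key2) + key3

theorem gT_bound (l : ℝ) (hl : 0 < l) (t : ℝ) (ht : |t| ≤ 1) (p : ℕ × ℕ) :
    ∃ r : ℝ, 0 ≤ r ∧ gT l 1 p = r ∧ ‖gT l t p‖ ≤ r := by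
  by_cases h : (p.1 : ℤ) - p.2 < 0
  · exact ⟨0, le_rfl, by simp [gT, gZ_neg _ _ _ h], by simp [gT, gZ_neg _ _ _ h]⟩
  · obtain ⟨m, hm⟩ := Int.eq_ofNat_of_zero_le (not_lt.1 h)
    obtain ⟨r, hr0, hr1, hr2⟩ := gegen_at_one l hl m
    obtain ⟨q, hq0, hq1⟩ := poch_real l hl (p.1 + 1)
    have hm' : (p.1 : ℂ) - p.2 = (m : ℝ) := by
      have : (((p.1 : ℤ) - p.2 : ℤ) : ℂ) = ((m : ℤ) : ℂ) := by rw [hm]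
      push_cast at this ⊢
      exact this
    refine ⟨(m + l) / (q * p.2.factorial) * r, by positivity, ?_, ?_⟩
    · rw [gT, hm, gZ_nat, hr1, hm', hq1]
      push_cast
      ring
    · rw [gT, hm, gZ_nat, hm', hq1, norm_mul]
      have : ‖(((m : ℝ) : ℂ) + l) / (q * (p.2.factorial : ℂ))‖ = (m + l) / (q * p.2.factorial) := by
        rw [← Complex.ofReal_natCast p.2.factorial, ← Complex.ofReal_add, ← Complex.ofReal_mul,
          ← Complex.ofReal_div, Complex.norm_real, Real.norm_of_nonneg (by positivity)]
      rw [this]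
      exact mul_le_mul_of_nonneg_left (hr2 t ht) (by positivity)

theorem gT_norm_sum (l : ℝ) (hl : 0 < l) (t : ℝ) (ht : |t| ≤ 1) (m : ℕ) :
    ∑ p ∈ Finset.HasAntidiagonal.antidiagonal m, ‖gT l t p‖ ≤ 2 ^ m / (m.factorial : ℝ) := by
  choose r hr0 hr1 hr2 using gT_bound l hl t ht
  apply (Finset.sum_le_sum (fun p _ => hr2 p)).trans
  have h := connection l hl 1 m
  simp only [hr1, mul_one] at h
  have : ∑ p ∈ Finset.HasAntidiagonal.antidiagonal m, r p = 2 ^ m / (m.factorial : ℝ) := by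
    apply Complex.ofReal_injective
    push_cast
    exact h
  exact this.le

/-- The double series. -/
noncomputable def gD (a l z t : ℂ) (p : ℕ × ℕ) : ℂ :=
  poch a (p.1 + p.2) * (2 * z)⁻¹ ^ (p.1 + p.2) * gT l t p

theorem gD_summable (a : ℂ) (l : ℝ) (hl : 0 < l) (z : ℝ) (hz : 1 < z) (t : ℝ) (ht : |t| ≤ 1) :
    Summable (gD a l z t) := by
  apply Summable.of_norm
  rw [← Finset.HasAntidiagonal.sigmaAntidiagonalEquivProd.summable_iff]
  refine (summable_sigma_of_nonneg (fun x => norm_nonneg (gD a l z t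
    (Finset.HasAntidiagonal.sigmaAntidiagonalEquivProd x)))).2 ?_
  refine ⟨fun m => Summable.of_finite, ?_⟩
  have hs := (binom_hasSum a ((z : ℂ)⁻¹) (by
    rw [norm_inv, Complex.norm_real, Real.norm_of_nonneg (by linarith)]
    exact inv_lt_one_of_one_lt₀ hz)).summable.norm
  apply Summable.of_nonneg_of_le (fun m => tsum_nonneg (fun _ => norm_nonneg _)) _ hs
  intro m
  simp only [Function.comp, Finset.HasAntidiagonal.sigmaAntidiagonalEquivProd_apply]
  rw [tsum_fintype, Finset.sum_coe_sort (Finset.HasAntidiagonal.antidiagonal m) (fun p => ‖gD a l z t p‖)]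
  have : ∀ p ∈ Finset.HasAntidiagonal.antidiagonal m, ‖gD a l z t p‖ =
      ‖poch a m * (2 * (z : ℂ))⁻¹ ^ m‖ * ‖gT l t p‖ := by
    intro p hp
    rw [gD, Finset.HasAntidiagonal.mem_antidiagonal.1 hp, norm_mul]
  rw [Finset.sum_congr rfl this, ← Finset.mul_sum]
  apply (mul_le_mul_of_nonneg_left (gT_norm_sum l hl t ht m) (norm_nonneg _)).trans
  apply le_of_eq
  simp only [norm_mul, norm_div, norm_pow, norm_inv, Complex.norm_natCast, Complex.norm_ofNat,
    mul_inv, mul_pow]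
  have : ((2 : ℝ)⁻¹) ^ m * 2 ^ m = 1 := by rw [← mul_pow]; norm_num
  linear_combination (‖poch a m‖ * ‖(z : ℂ)‖⁻¹ ^ m / m.factorial) * this

theorem gD_tsum (a : ℂ) (l : ℝ) (hl : 0 < l) (z : ℝ) (hz : 1 < z) (t : ℝ) (ht : |t| ≤ 1) :
    ∑' p, gD a l z t p = (1 - (t : ℂ) / z) ^ (-a) := by
  have hS := gD_summable a l hl z hz t ht
  rw [← Finset.HasAntidiagonal.sigmaAntidiagonalEquivProd.summable_iff] at hS
  rw [← Finset.HasAntidiagonal.sigmaAntidiagonalEquivProd.tsum_eq]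
  refine (hS.tsum_sigma' (fun m => Summable.of_finite)).trans ?_
  rw [← (binom_hasSum a ((t : ℂ) / z) (by
    rw [norm_div, Complex.norm_real, Complex.norm_real, Real.norm_of_nonneg (show 0 ≤ z by linarith),
      div_lt_one (by linarith)]
    exact lt_of_le_of_lt ht hz)).tsum_eq]
  congr 1
  funext m
  simp only [Function.comp, Finset.HasAntidiagonal.sigmaAntidiagonalEquivProd_apply]
  rw [tsum_fintype, Finset.sum_coe_sort (Finset.HasAntidiagonal.antidiagonal m) (fun p => gD a l z t p)]
  have : ∀ p ∈ Finset.HasAntidiagonal.antidiagonal m, gD a l z t p =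
      (poch a m * (2 * (z : ℂ))⁻¹ ^ m) * gT l t p := by
    intro p hp
    rw [gD, Finset.HasAntidiagonal.mem_antidiagonal.1 hp]
  rw [Finset.sum_congr rfl this, ← Finset.mul_sum, connection l hl t m]
  have : ((2 : ℂ)⁻¹) ^ m * 2 ^ m = 1 := by rw [← mul_pow]; norm_num
  rw [mul_inv, mul_pow, mul_pow, div_pow, inv_pow (z : ℂ)]
  linear_combination (poch a m * ((z : ℂ) ^ m)⁻¹ * (t : ℂ) ^ m / m.factorial) * this

theorem gD_iter (a : ℂ) (l : ℝ) (hl : 0 < l) (z : ℝ) (hz : 1 < z) (t : ℝ) (ht : |t| ≤ 1) :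
    ∑' n : ℕ, ∑' k : ℕ, gD a l z t (n + k, k) = (1 - (t : ℂ) / z) ^ (-a) := by
  have hS := gD_summable a l hl z hz t ht
  let e : ℕ × ℕ → ℕ × ℕ := fun p => (p.1 + p.2, p.2)
  have he : Function.Injective e := by
    rintro ⟨a, b⟩ ⟨c, d⟩ h
    simp only [e, Prod.mk.injEq] at h ⊢
    omega
  have hsupp : Function.support (gD a l z t) ⊆ Set.range e := by
    rintro ⟨j, k⟩ h
    by_cases hjk : k ≤ j
    · exact ⟨(j - k, k), by simp [e, hjk]⟩
    · exfalso
      apply h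
      simp only [gD, gT]
      rw [gZ_neg _ _ _ (by push_cast; omega)]
      simp
  rw [← gD_tsum a l hl z hz t ht, ← he.tsum_eq hsupp]
  exact ((hS.comp_injective he).tsum_prod).symm

/-- The constant factor. -/
noncomputable def gK (a l z : ℂ) : ℂ :=
  2 * (Real.sqrt Real.pi : ℂ) * Complex.exp (Real.pi * I * (a - l - 1 / 2)) * Complex.Gamma a *
    (z ^ 2 - 1) ^ ((a - l - 1 / 2) / 2) / ((2 : ℂ) ^ (l + 1 / 2) * Complex.Gamma l * z ^ a)

theorem term_eq (a : ℂ) (ha : ∀ m : ℕ, a ≠ -(m : ℂ)) (l : ℝ) (hl : 0 < l) (z : ℝ) (hz : 1 < z)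
    (t : ℂ) (n : ℕ) :
    (2 * (n : ℂ) + 2 * l) * legendreQ (n + l - 1 / 2) (a - l - 1 / 2) z * gegenbauerC n l t =
      gK a l z * ∑' k : ℕ, gD a l z t (n + k, k) := by
  have hz0 : (z : ℂ) ≠ 0 := by
    have : z ≠ 0 := by linarith
    exact_mod_cast this
  have hGl : Complex.Gamma l ≠ 0 := Complex.Gamma_ne_zero (real_ne_neg l hl)
  have hP : ∀ k, poch (l : ℂ) k ≠ 0 := poch_real_ne l hl
  have h2l : (2 : ℂ) ^ ((l : ℂ) + 1 / 2) ≠ 0 := by simp [Complex.cpow_eq_zero_iff]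
  have hza : (z : ℂ) ^ a ≠ 0 := by simp [Complex.cpow_eq_zero_iff, hz0]
  unfold legendreQ
  rw [show (n : ℂ) + l - 1 / 2 + (a - l - 1 / 2) + 1 = n + a by ring,
    show (n : ℂ) + l - 1 / 2 + (a - l - 1 / 2) + 2 = n + a + 1 by ring,
    show (n : ℂ) + l - 1 / 2 + 3 / 2 = (n + 1 : ℕ) + l by push_cast; ring,
    show (n : ℂ) + l - 1 / 2 + 1 = n + (l + 1 / 2) by ring,
    Complex.cpow_add _ _ two_ne_zero, Complex.cpow_add _ _ hz0, Complex.cpow_natCast,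
    Complex.cpow_natCast, Gamma_add_nat a ha, Gamma_add_nat l (real_ne_neg l hl)]
  unfold hyp2F1
  rw [← tsum_mul_left, ← tsum_mul_left, ← tsum_mul_left, ← tsum_mul_right]
  congr 1
  funext k
  rw [poch_dup, gD, gT, gK]
  simp only
  rw [show ((n + k : ℕ) : ℤ) - (k : ℤ) = (n : ℤ) by push_cast; ring, gZ_nat,
    show n + k + k = n + 2 * k by ring, poch_add a n (2 * k),
    show n + k + 1 = (n + 1) + k by ring, poch_add (l : ℂ) (n + 1) k,
    show (a + n) = n + a by ring, show (l : ℂ) + (n + 1 : ℕ) = (n + 1 : ℕ) + l by ring]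
  have hPk : poch (((n + 1 : ℕ) : ℂ) + l) k ≠ 0 := by
    have := hP (n + 1 + k)
    rw [poch_add, add_comm (l : ℂ)] at this
    exact right_ne_zero_of_mul this
  have hf : (k.factorial : ℂ) ≠ 0 := by exact_mod_cast Nat.factorial_ne_zero k
  have hPn := hP (n + 1)
  generalize poch (((n + 1 : ℕ) : ℂ) + l) k = P1 at *
  generalize poch (l : ℂ) (n + 1) = P2 at *
  generalize (2 : ℂ) ^ ((l : ℂ) + 1 / 2) = T1 at *
  generalize (z : ℂ) ^ a = T2 at *
  generalize Complex.Gamma l = T3 at *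
  generalize ((z : ℂ) ^ 2 - 1) ^ ((a - l - 1 / 2) / 2) = T4 at *
  generalize Complex.exp (Real.pi * I * (a - l - 1 / 2)) = T5 at *
  generalize Complex.Gamma a = T6 at *
  generalize gegenbauerC n l t = T7 at *
  generalize poch (n + a) (2 * k) = T8 at *
  generalize poch a n = T9 at *
  push_cast
  have w1 : (2 * (z : ℂ))⁻¹ ^ (n + 2 * k) = 1 / (2 ^ n * 4 ^ k * z ^ n * (z ^ k) ^ 2) := by
    rw [inv_pow, pow_add, mul_pow, pow_mul, mul_pow, mul_pow, one_div]
    congr 1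
    norm_num
    ring
  have w2 : (1 / (z : ℂ) ^ 2) ^ k = 1 / (z ^ k) ^ 2 := by
    rw [div_pow, one_pow, ← pow_mul, ← pow_mul, mul_comm]
  rw [w1, w2]
  have w3 : (z : ℂ) ^ k ≠ 0 := pow_ne_zero _ hz0
  have w4 : (z : ℂ) ^ n ≠ 0 := pow_ne_zero _ hz0
  have w5 : (4 : ℂ) ^ k ≠ 0 := pow_ne_zero _ (by norm_num)
  have w6 : (2 : ℂ) ^ n ≠ 0 := pow_ne_zero _ (by norm_num)
  generalize (z : ℂ) ^ k = W3 at *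
  generalize (z : ℂ) ^ n = W4 at *
  generalize (4 : ℂ) ^ k = W5 at *
  generalize (2 : ℂ) ^ n = W6 at *
  field_simp
  ring

theorem cpow_pos (y : ℝ) (hy : 0 < y) (s : ℂ) : (y : ℂ) ^ s = Complex.exp (Real.log y * s) := by
  rw [Complex.cpow_def_of_ne_zero (by exact_mod_cast hy.ne'), Complex.ofReal_log hy.le]

theorem prefactor (a : ℂ) (ha : ∀ m : ℕ, a ≠ -(m : ℂ)) (l : ℝ) (hl : 0 < l) (r r' N t : ℝ)
    (hr : 0 < r) (hr' : 0 < r') (h : r' < r) (hN : 0 < N)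
    (hNt : N ^ 2 = r ^ 2 + r' ^ 2 - 2 * r * r' * t) :
    Complex.exp (-(Real.pi * I * (a - l - 1 / 2))) * Complex.Gamma l /
      (2 * (Real.sqrt Real.pi : ℂ) * Complex.Gamma a) *
      (((r ^ 2 - r' ^ 2 : ℝ) : ℂ) ^ (-(a - l - 1 / 2)) / ((r * r' : ℝ) : ℂ) ^ ((l : ℂ) + 1 / 2)) *
      (gK a l (((r ^ 2 + r' ^ 2) / (2 * r * r') : ℝ) : ℂ) *
        (1 - (t : ℂ) / (((r ^ 2 + r' ^ 2) / (2 * r * r') : ℝ) : ℂ)) ^ (-a)) =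
      (N : ℂ) ^ (-2 * a) := by
  have hGl : Complex.Gamma l ≠ 0 := Complex.Gamma_ne_zero (real_ne_neg l hl)
  have hGa : Complex.Gamma a ≠ 0 := Complex.Gamma_ne_zero ha
  have hpi : (Real.sqrt Real.pi : ℂ) ≠ 0 := by
    have : Real.sqrt Real.pi ≠ 0 := (Real.sqrt_pos.2 Real.pi_pos).ne'
    exact_mod_cast this
  have hR : 0 < r ^ 2 - r' ^ 2 := by nlinarith
  have hS : 0 < r ^ 2 + r' ^ 2 := by positivity
  have e1 : ((((r ^ 2 + r' ^ 2) / (2 * r * r') : ℝ) : ℂ) ^ 2 - 1) =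
      ((((r ^ 2 - r' ^ 2) / (2 * (r * r'))) ^ 2 : ℝ) : ℂ) := by
    rw [← Complex.ofReal_pow, ← Complex.ofReal_one, ← Complex.ofReal_sub]
    congr 1
    field_simp
    ring
  have e2 : (1 - (t : ℂ) / (((r ^ 2 + r' ^ 2) / (2 * r * r') : ℝ) : ℂ)) =
      ((N ^ 2 / (r ^ 2 + r' ^ 2) : ℝ) : ℂ) := by
    rw [← Complex.ofReal_div, ← Complex.ofReal_one, ← Complex.ofReal_sub]
    congr 1
    rw [hNt]
    field_simp
  rw [gK, e1, e2, show (2 : ℂ) = ((2 : ℝ) : ℂ) by norm_num,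
    cpow_pos (r ^ 2 - r' ^ 2) hR, cpow_pos (r * r') (by positivity),
    cpow_pos (((r ^ 2 - r' ^ 2) / (2 * (r * r'))) ^ 2) (by positivity),
    cpow_pos 2 two_pos, cpow_pos ((r ^ 2 + r' ^ 2) / (2 * r * r')) (by positivity),
    cpow_pos (N ^ 2 / (r ^ 2 + r' ^ 2)) (by positivity), cpow_pos N hN,
    Real.log_pow, Real.log_div hR.ne' (by positivity),
    Real.log_mul (x := 2) (by norm_num) (by positivity),
    Real.log_div hS.ne' (by positivity), Real.log_div (by positivity) hS.ne', Real.log_pow,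
    show Real.log (2 * r * r') = Real.log 2 + Real.log (r * r') by
      rw [mul_assoc, Real.log_mul (by norm_num) (by positivity)]]
  generalize Real.log (r ^ 2 - r' ^ 2) = A
  generalize Real.log (r ^ 2 + r' ^ 2) = B
  generalize Real.log (r * r') = C
  generalize Real.log 2 = D
  generalize Real.log N = E
  push_cast
  have : ∀ G P G' u1 u2 u3 u4 u5 u6 u7 u8 u9 : ℂ, G ≠ 0 → P ≠ 0 → G' ≠ 0 →
      u1 + u2 + u3 + u4 + u5 = u6 + u7 + u8 + u9 → 
      Complex.exp u1 * G / (2 * P * G') * (Complex.exp u2 / Complex.exp u6) *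
      (2 * P * Complex.exp u3 * G' * Complex.exp u4 /
        (Complex.exp u7 * G * Complex.exp u8) * Complex.exp u5) = Complex.exp u9 := by
    intro G P G' u1 u2 u3 u4 u5 u6 u7 u8 u9 hG hP hG' hu
    have hu' : u9 = u1 + u2 + u3 + u4 + u5 - u6 - u7 - u8 := by linear_combination -hu
    rw [hu', Complex.exp_sub, Complex.exp_sub, Complex.exp_sub, Complex.exp_add, Complex.exp_add,
      Complex.exp_add, Complex.exp_add]
    field_simp
  apply this _ _ _ _ _ _ _ _ _ _ _ _ hGl hpi hGa
  push_cast
  ring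

/-- Gegenbauer expansion of a power-law fundamental solution of the
polyharmonic equation on `ℝ^d`, `d ≥ 3`. -/
theorem power_law_gegenbauer_expansion
    (d : ℕ) (hd : 3 ≤ d)
    (ν : ℂ) (hν : ∀ m : ℕ, -ν / 2 ≠ -(m : ℂ))
    (x x' : EuclideanSpace ℝ (Fin d))
    (hr : 0 < ‖x‖) (hr' : 0 < ‖x'‖) (hne : ‖x‖ ≠ ‖x'‖) :
    (‖x - x'‖ : ℂ) ^ ν =
      Complex.exp (Real.pi * I * (ν + (d : ℂ) - 1) / 2) * Complex.Gamma (((d : ℂ) - 2) / 2) /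
          (2 * (Real.sqrt Real.pi : ℂ) * Complex.Gamma (-ν / 2)) *
        ((((max ‖x‖ ‖x'‖) ^ 2 - (min ‖x‖ ‖x'‖) ^ 2 : ℝ) : ℂ) ^ ((ν + (d : ℂ) - 1) / 2) /
          ((‖x‖ * ‖x'‖ : ℝ) : ℂ) ^ (((d : ℂ) - 1) / 2)) *
        ∑' n : ℕ,
          (2 * (n : ℂ) + (d : ℂ) - 2) *
            legendreQ ((n : ℂ) + ((d : ℂ) - 3) / 2) ((1 - ν - (d : ℂ)) / 2)
              (((‖x‖ ^ 2 + ‖x'‖ ^ 2) / (2 * ‖x‖ * ‖x'‖) : ℝ) : ℂ) *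
            gegenbauerC n ((d : ℂ) / 2 - 1) ((⟪x, x'⟫ / (‖x‖ * ‖x'‖) : ℝ) : ℂ) := by
  have hd' : (3 : ℝ) ≤ d := by exact_mod_cast hd
  obtain ⟨l, hl⟩ : ∃ l : ℝ, l = (d : ℝ) / 2 - 1 := ⟨_, rfl⟩
  have hl0 : 0 < l := by rw [hl]; linarith
  have hdl : (d : ℂ) = 2 * l + 2 := by rw [hl]; push_cast; ring
  obtain ⟨a, haν⟩ : ∃ a : ℂ, a = -ν / 2 := ⟨_, rfl⟩
  have hνa : ν = -2 * a := by rw [haν]; ring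
  have ha : ∀ m : ℕ, a ≠ -(m : ℂ) := by rw [haν]; exact hν
  obtain ⟨t, htdef⟩ : ∃ t : ℝ, t = ⟪x, x'⟫ / (‖x‖ * ‖x'‖) := ⟨_, rfl⟩
  have ht : |t| ≤ 1 := by rw [htdef]; exact abs_real_inner_div_norm_mul_norm_le_one x x'
  have hNt : ‖x - x'‖ ^ 2 = ‖x‖ ^ 2 + ‖x'‖ ^ 2 - 2 * ‖x‖ * ‖x'‖ * t := by
    rw [norm_sub_sq_real, htdef]
    field_simp
    ring
  have hN : 0 < ‖x - x'‖ := by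
    rw [norm_pos_iff, sub_ne_zero]
    rintro rfl
    exact hne rfl
  rw [← htdef]
  generalize ‖x - x'‖ = N at *
  generalize ‖x‖ = r at *
  generalize ‖x'‖ = r' at *
  clear htdef x x'
  have hz : 1 < (r ^ 2 + r' ^ 2) / (2 * r * r') := by
    rw [one_lt_div (by positivity)]
    have := sq_pos_of_ne_zero (sub_ne_zero.2 hne)
    nlinarith
  have hterm : ∀ n : ℕ, (2 * (n : ℂ) + (d : ℂ) - 2) *
      legendreQ ((n : ℂ) + ((d : ℂ) - 3) / 2) ((1 - ν - (d : ℂ)) / 2)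
        (((r ^ 2 + r' ^ 2) / (2 * r * r') : ℝ) : ℂ) * gegenbauerC n ((d : ℂ) / 2 - 1) (t : ℂ) =
      gK a l (((r ^ 2 + r' ^ 2) / (2 * r * r') : ℝ) : ℂ) * ∑' k : ℕ,
        gD a l (((r ^ 2 + r' ^ 2) / (2 * r * r') : ℝ) : ℂ) t (n + k, k) := by
    intro n
    rw [← term_eq a ha l hl0 _ hz t n]
    rw [show 2 * (n : ℂ) + (d : ℂ) - 2 = 2 * n + 2 * l by rw [hdl]; ring,
      show (n : ℂ) + ((d : ℂ) - 3) / 2 = n + l - 1 / 2 by rw [hdl]; ring,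
      show (1 - ν - (d : ℂ)) / 2 = a - l - 1 / 2 by rw [hdl, hνa]; ring,
      show (d : ℂ) / 2 - 1 = l by rw [hdl]; ring]
  simp only [hterm]
  rw [tsum_mul_left, gD_iter a l hl0 _ hz t ht,
    show (Real.pi : ℂ) * I * (ν + (d : ℂ) - 1) / 2 = -(Real.pi * I * (a - l - 1 / 2)) by
      rw [hdl, hνa]; ring,
    show ((d : ℂ) - 2) / 2 = l by rw [hdl]; ring, ← haν,
    show (ν + (d : ℂ) - 1) / 2 = -(a - l - 1 / 2) by rw [hdl, hνa]; ring,
    show ((d : ℂ) - 1) / 2 = (l : ℂ) + 1 / 2 by rw [hdl]; ring, hνa]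
  rcases lt_or_gt_of_ne hne with h | h
  · rw [max_eq_right h.le, min_eq_left h.le, ← prefactor a ha l hl0 r' r N t hr' hr h hN
      (by rw [hNt]; ring), mul_comm r' r, add_comm (r' ^ 2), mul_right_comm 2 r' r]
  · rw [max_eq_left h.le, min_eq_right h.le, ← prefactor a ha l hl0 r r' N t hr hr' h hN hNt]
end

section
/- Laplace's expansion on ℝ³: for x, x' ∈ ℝ³ with r := ‖x‖ > 0, r' := ‖x'‖ > 0, r ≠ r', and cos γ := (x, x')/(r r'), one has 1/‖x − x'‖ = Σ_{n=0}^∞ (r_<^n / r_>^{n+1}) P_n(cos γ), where r_< := min{r, r'}, r_> := max{r, r'}, and P_n is the Legendre polynomial of degree n. -/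
open Complex

open scoped RealInnerProductSpace

/-- Real Pochhammer symbol (rising factorial). -/
noncomputable def pochR (a : ℝ) (k : ℕ) : ℝ := ∏ i ∈ Finset.range k, (a + (i : ℝ))

/-- Real Legendre polynomial `P_n(x)`. -/
noncomputable def legendrePR (n : ℕ) (x : ℝ) : ℝ :=
  ∑ j ∈ Finset.range (n + 1),
    pochR (-(n : ℝ)) j * pochR ((n : ℝ) + 1) j / (pochR 1 j * (Nat.factorial j : ℝ)) *
      ((1 - x) / 2) ^ j

/-- Coefficient of the Legendre polynomial. -/
noncomputable def legA (n j : ℕ) : ℝ :=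
  pochR (-(n : ℝ)) j * pochR ((n : ℝ) + 1) j / (pochR 1 j * (Nat.factorial j : ℝ))

lemma pochR_succ (a : ℝ) (k : ℕ) : pochR a (k + 1) = pochR a k * (a + k) := by
  simp [pochR, Finset.prod_range_succ]

lemma pochR_succ' (a : ℝ) (k : ℕ) : pochR a (k + 1) = a * pochR (a + 1) k := by
  simp only [pochR, Finset.prod_range_succ']
  rw [mul_comm]
  congr 1
  · simp
  · apply Finset.prod_congr rfl
    intro i _
    push_cast
    ring

lemma pochR_zero (a : ℝ) : pochR a 0 = 1 := by simp [pochR]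

lemma pochR_one_eq (k : ℕ) : pochR 1 k = (Nat.factorial k : ℝ) := by
  induction k with
  | zero => simp [pochR]
  | succ k ih => rw [pochR_succ, ih, Nat.factorial_succ]; push_cast; ring

lemma pochR_neg_eq_zero {n j : ℕ} (h : n < j) : pochR (-(n : ℝ)) j = 0 := by
  apply Finset.prod_eq_zero (Finset.mem_range.2 h)
  simp

lemma legA_zero (n : ℕ) : legA n 0 = 1 := by simp [legA, pochR]

lemma legA_rec_succ (n j : ℕ) :
    ((n : ℝ) + 2) * legA (n + 2) (j + 1) - (2 * n + 3) * legA (n + 1) (j + 1)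
      + (n + 1) * legA n (j + 1) + 2 * (2 * n + 3) * legA (n + 1) j = 0 := by
  cases j with
  | zero =>
    simp only [legA, pochR_succ, pochR_zero]
    push_cast
    simp
    ring
  | succ m =>
    have hf : (Nat.factorial m : ℝ) ≠ 0 := by positivity
    have hm1 : (m : ℝ) + 1 ≠ 0 := by positivity
    have hm2 : (m : ℝ) + 2 ≠ 0 := by positivity
    simp only [legA, pochR_one_eq, Nat.factorial_succ]
    have e1 : pochR (-(n : ℝ)) (m + 1 + 1) = pochR (-(n : ℝ)) m * (m - n) * (m + 1 - n) := by
      rw [pochR_succ, pochR_succ]; push_cast; ring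
    have e2 : pochR (-((n + 1 : ℕ) : ℝ)) (m + 1 + 1)
        = (-1 - n) * (pochR (-(n : ℝ)) m * (m - n)) := by
      rw [pochR_succ', show -((n + 1 : ℕ) : ℝ) + 1 = -(n : ℝ) by push_cast; ring, pochR_succ]
      push_cast; ring
    have e3 : pochR (-((n + 2 : ℕ) : ℝ)) (m + 1 + 1)
        = (-2 - n) * ((-1 - n) * pochR (-(n : ℝ)) m) := by
      rw [pochR_succ', pochR_succ',
        show -((n + 2 : ℕ) : ℝ) + 1 + 1 = -(n : ℝ) by push_cast; ring]
      push_cast; ring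
    have e4 : pochR (-((n + 1 : ℕ) : ℝ)) (m + 1) = (-1 - n) * pochR (-(n : ℝ)) m := by
      rw [pochR_succ', show -((n + 1 : ℕ) : ℝ) + 1 = -(n : ℝ) by push_cast; ring]
      push_cast; ring
    have f1 : pochR ((n : ℝ) + 1) (m + 1 + 1) = (n + 1) * ((n + 2) * pochR ((n : ℝ) + 3) m) := by
      rw [pochR_succ', pochR_succ', show (n : ℝ) + 1 + 1 + 1 = n + 3 by ring]; ring
    have f2 : pochR (((n + 1 : ℕ) : ℝ) + 1) (m + 1 + 1)
        = (n + 2) * (pochR ((n : ℝ) + 3) m * (m + n + 3)) := by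
      rw [pochR_succ', show ((n + 1 : ℕ) : ℝ) + 1 + 1 = n + 3 by push_cast; ring, pochR_succ]
      push_cast; ring
    have f3 : pochR (((n + 2 : ℕ) : ℝ) + 1) (m + 1 + 1)
        = pochR ((n : ℝ) + 3) m * (m + n + 3) * (m + n + 4) := by
      rw [show ((n + 2 : ℕ) : ℝ) + 1 = n + 3 by push_cast; ring, pochR_succ, pochR_succ]
      push_cast; ring
    have f4 : pochR (((n + 1 : ℕ) : ℝ) + 1) (m + 1) = (n + 2) * pochR ((n : ℝ) + 3) m := by
      rw [pochR_succ', show ((n + 1 : ℕ) : ℝ) + 1 + 1 = n + 3 by push_cast; ring]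
      push_cast; ring
    rw [e1, e2, e3, e4, f1, f2, f3, f4]
    generalize pochR (-(n : ℝ)) m = P
    generalize pochR ((n : ℝ) + 3) m = Q
    push_cast
    rw [show (m : ℝ) + 1 + 1 = m + 2 by ring]
    field_simp
    ring

lemma legendrePR_eq (n N : ℕ) (h : n < N) (x : ℝ) :
    legendrePR n x = ∑ j ∈ Finset.range N, legA n j * ((1 - x) / 2) ^ j := by
  unfold legendrePR
  apply Finset.sum_subset
  · intro i hi
    simp only [Finset.mem_range] at *
    omega
  · intro j _ hj
    simp only [Finset.mem_range, not_lt] at hj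
    rw [pochR_neg_eq_zero (by omega)]
    simp

lemma legendrePR_rec (n : ℕ) (x : ℝ) :
    ((n : ℝ) + 2) * legendrePR (n + 2) x
      = (2 * n + 3) * x * legendrePR (n + 1) x - (n + 1) * legendrePR n x := by
  obtain ⟨y, rfl⟩ : ∃ y, x = 1 - 2 * y := ⟨(1 - x) / 2, by ring⟩
  have h1 := legendrePR_eq (n + 1) (n + 2) (by omega) (1 - 2 * y)
  have h1' := legendrePR_eq (n + 1) (n + 3) (by omega) (1 - 2 * y)
  have h2 := legendrePR_eq (n + 2) (n + 3) (by omega) (1 - 2 * y)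
  have h0 := legendrePR_eq n (n + 3) (by omega) (1 - 2 * y)
  rw [show (1 - (1 - 2 * y)) / 2 = y by ring] at h1 h1' h2 h0
  rw [Finset.sum_range_succ'] at h1' h2 h0
  have key : ∑ j ∈ Finset.range (n + 2),
      (((n : ℝ) + 2) * legA (n + 2) (j + 1) - (2 * n + 3) * legA (n + 1) (j + 1)
      + (n + 1) * legA n (j + 1) + 2 * (2 * n + 3) * legA (n + 1) j) * y ^ (j + 1) = 0 := by
    apply Finset.sum_eq_zero
    intro j _
    rw [legA_rec_succ, zero_mul]
  have key2 : ((n : ℝ) + 2) * (∑ j ∈ Finset.range (n + 2), legA (n + 2) (j + 1) * y ^ (j + 1))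
      - (2 * n + 3) * (∑ j ∈ Finset.range (n + 2), legA (n + 1) (j + 1) * y ^ (j + 1))
      + (n + 1) * (∑ j ∈ Finset.range (n + 2), legA n (j + 1) * y ^ (j + 1))
      + 2 * (2 * n + 3) * y * (∑ j ∈ Finset.range (n + 2), legA (n + 1) j * y ^ j) = 0 := by
    rw [← key]
    simp only [Finset.mul_sum]
    rw [← Finset.sum_sub_distrib, ← Finset.sum_add_distrib, ← Finset.sum_add_distrib]
    apply Finset.sum_congr rfl
    intro j _
    ring
  simp only [legA_zero, pow_zero, mul_one] at h1' h2 h0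
  rw [← h1] at key2
  linear_combination key2 + (n + 2) * h2 - (2 * n + 3) * h1' + (n + 1) * h0

lemma legendrePR_zero (x : ℝ) : legendrePR 0 x = 1 := by simp [legendrePR, pochR]

lemma legendrePR_one (x : ℝ) : legendrePR 1 x = x := by
  simp [legendrePR, pochR, Finset.sum_range_succ]
  ring

/-- Binomial coefficients of exponent `-1/2`. -/
noncomputable def bch (k : ℕ) : ℂ := Ring.choose (((-1 / 2 : ℝ) : ℂ)) k

lemma bch_zero : bch 0 = 1 := by simp [bch]

lemma bch_succ (k : ℕ) : ((k : ℂ) + 1) * bch (k + 1) = (-1 / 2 - k) * bch k := by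
  have h := Ring.choose_add_smul_choose (((-1 / 2 : ℝ) : ℂ) - k) 1 k
  have h1 := Ring.choose_smul_choose (((-1 / 2 : ℝ) : ℂ)) (n := k + 1) (k := k) (by omega)
  simp only [Nat.choose_succ_self_right, nsmul_eq_mul, Nat.add_sub_cancel_left,
    Ring.choose_one_right] at h1
  unfold bch
  push_cast at h1 ⊢
  rw [h1]
  ring

open PowerSeries in
lemma bch_ode (w : ℂ) :
    (1 + C w * X) * d⁄dX ℂ (PowerSeries.mk fun k => bch k * w ^ k)
      = C (-1 / 2 * w) * (PowerSeries.mk fun k => bch k * w ^ k) := by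
  ext n
  rw [add_mul, one_mul, map_add, mul_assoc, coeff_C_mul, coeff_C_mul]
  cases n with
  | zero =>
    have := bch_succ 0
    simp [coeff_derivative] at this ⊢
    rw [this]
    ring
  | succ n =>
    have := bch_succ (n + 1)
    rw [coeff_succ_X_mul, coeff_derivative, coeff_derivative]
    simp only [coeff_mk]
    push_cast at this ⊢
    linear_combination w ^ (n + 1 + 1) * this

open PowerSeries in
lemma cauchy_rec (w v c : ℂ) (h1 : w * v = 1) (h2 : w + v = -2 * c) (H : PowerSeries ℂ)
    (hH : H = (PowerSeries.mk fun k => bch k * w ^ k) * (PowerSeries.mk fun k => bch k * v ^ k))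
    (n : ℕ) :
    ((n : ℂ) + 2) * coeff (n + 2) H = (2 * n + 3) * c * coeff (n + 1) H - (n + 1) * coeff n H := by
  have hw := bch_ode w
  have hv := bch_ode v
  have ode : (1 - C (2 * c) * X + X * X) * d⁄dX ℂ H = C c * H - X * H := by
    have e1 : (C w * C v : PowerSeries ℂ) = 1 := by rw [← map_mul, h1, map_one]
    have e2 : (C (2 * c) : PowerSeries ℂ) = - (C w + C v) := by
      rw [← map_add, h2, ← map_neg]; congr 1; ring
    have e3 : (C c : PowerSeries ℂ) = C (-1 / 2) * (C w + C v) := by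
      rw [← map_add, h2, ← map_mul]; congr 1; ring
    have e4 : (1 : PowerSeries ℂ) = - (2 * C (-1 / 2)) := by
      rw [← map_ofNat C 2, ← map_mul, ← map_neg, ← map_one C]; congr 1; norm_num
    rw [hH, Derivation.leibniz]
    rw [map_mul] at hw hv
    simp only [smul_eq_mul]
    set F := (PowerSeries.mk fun k => bch k * w ^ k)
    set G := (PowerSeries.mk fun k => bch k * v ^ k)
    rw [e2, e3]
    linear_combination (1 + C v * X) * G * hw + (1 + C w * X) * F * hv
      + (-(X * X) * (F * d⁄dX ℂ G + G * d⁄dX ℂ F) + 2 * C (-1 / 2) * X * F * G) * e1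
      + X * F * G * e4
  have := congrArg (coeff (n + 1)) ode
  rw [add_mul, sub_mul, one_mul, mul_assoc, mul_assoc, map_add, map_sub, map_sub,
    coeff_C_mul, coeff_C_mul, coeff_succ_X_mul, coeff_succ_X_mul, coeff_succ_X_mul,
    coeff_derivative, coeff_derivative] at this
  cases n with
  | zero =>
    simp at this ⊢
    linear_combination this
  | succ m =>
    rw [coeff_succ_X_mul, coeff_derivative] at this
    push_cast at this ⊢
    linear_combination this

open PowerSeries in
lemma legendre_eq_coeff (w v : ℂ) (c : ℝ) (h1 : w * v = 1) (h2 : w + v = -2 * c) (n : ℕ) :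
    coeff n ((PowerSeries.mk fun k => bch k * w ^ k) * (PowerSeries.mk fun k => bch k * v ^ k))
      = (legendrePR n c : ℂ) := by
  set H := (PowerSeries.mk fun k => bch k * w ^ k) * (PowerSeries.mk fun k => bch k * v ^ k)
    with hH
  induction n using Nat.twoStepInduction with
  | zero => simp [hH, bch_zero, legendrePR_zero]
  | one =>
    have hb := bch_succ 0
    simp [bch_zero] at hb
    rw [hH, coeff_mul]
    simp [Finset.Nat.antidiagonal_succ, legendrePR_one, bch_zero, hb]
    linear_combination (-1 / 2) * h2
  | more n ih0 ih1 =>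
    have r1 := cauchy_rec w v c h1 h2 H hH n
    have r2 := congrArg (fun t : ℝ => (t : ℂ)) (legendrePR_rec n c)
    push_cast at r2
    rw [ih0, ih1, ← r2] at r1
    have : (n : ℂ) + 2 ≠ 0 := by exact_mod_cast (by omega : n + 2 ≠ 0)
    exact mul_left_cancel₀ this r1

lemma bch_hasSum (z : ℂ) (hz : ‖z‖ < 1) :
    Summable (fun k => ‖bch k * z ^ k‖) ∧
      ∑' k, bch k * z ^ k = (1 + z) ^ (((-1 / 2 : ℝ) : ℂ)) := by
  have hb := Complex.one_add_cpow_hasFPowerSeriesOnBall_zero (a := ((-1 / 2 : ℝ) : ℂ))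
  have hz' : z ∈ Metric.eball (0 : ℂ) 1 := by
    rw [← ENNReal.ofReal_one, Metric.eball_ofReal]
    simpa using hz
  have hs := hb.hasSum hz'
  have hn := FormalMultilinearSeries.summable_norm_apply _ (Metric.eball_subset_eball hb.r_le hz')
  simp only [binomialSeries_apply, List.ofFn_const, List.prod_replicate, smul_eq_mul,
    zero_add] at hs hn
  exact ⟨hn, hs.tsum_eq⟩

lemma gen_fun (c h : ℝ) (hc : |c| ≤ 1) (h0 : 0 ≤ h) (h1 : h < 1) :
    ∑' n : ℕ, h ^ n * legendrePR n c = (Real.sqrt (1 - 2 * c * h + h ^ 2))⁻¹ := by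
  have hc2 : 0 ≤ 1 - c ^ 2 := by
    have := (sq_le_one_iff_abs_le_one c).2 hc
    linarith
  set s := Real.sqrt (1 - c ^ 2) with hs
  have hss : s * s = 1 - c ^ 2 := Real.mul_self_sqrt hc2
  set w : ℂ := ⟨-c, s⟩ with hw
  set v : ℂ := ⟨-c, -s⟩ with hv
  have hwv : w * v = 1 := by
    apply Complex.ext
    · simp [hw, hv]; nlinarith
    · simp [hw, hv]; ring
  have hadd : w + v = -2 * (c : ℂ) := by
    apply Complex.ext
    · simp [hw, hv]; ring
    · simp [hw, hv]
  have hnw : ‖w‖ = 1 := by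
    rw [Complex.norm_def, Real.sqrt_eq_one, Complex.normSq_apply]
    simp [hw]; nlinarith
  have hnv : ‖v‖ = 1 := by
    rw [Complex.norm_def, Real.sqrt_eq_one, Complex.normSq_apply]
    simp [hv]; nlinarith
  have hwh : ‖w * h‖ < 1 := by rw [norm_mul, hnw]; simpa [abs_of_nonneg h0] using h1
  have hvh : ‖v * h‖ < 1 := by rw [norm_mul, hnv]; simpa [abs_of_nonneg h0] using h1
  obtain ⟨sw, tw⟩ := bch_hasSum _ hwh
  obtain ⟨sv, tv⟩ := bch_hasSum _ hvh
  have prod := tsum_mul_tsum_eq_tsum_sum_antidiagonal_of_summable_norm sw sv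
  have hterm : ∀ n : ℕ, ∑ kl ∈ Finset.HasAntidiagonal.antidiagonal n,
      bch kl.1 * (w * h) ^ kl.1 * (bch kl.2 * (v * h) ^ kl.2)
        = ((h ^ n * legendrePR n c : ℝ) : ℂ) := by
    intro n
    push_cast
    rw [← legendre_eq_coeff w v c hwv hadd n, PowerSeries.coeff_mul, Finset.mul_sum]
    apply Finset.sum_congr rfl
    rintro ⟨i, j⟩ hij
    rw [Finset.HasAntidiagonal.mem_antidiagonal] at hij
    simp only [PowerSeries.coeff_mk] at hij ⊢
    rw [← hij, pow_add, mul_pow, mul_pow]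
    ring
  simp only [hterm] at prod
  rw [← Complex.ofReal_tsum, tw, tv] at prod
  have hslit : 1 + w * h ∈ Complex.slitPlane := Complex.mem_slitPlane_of_norm_lt_one hwh
  have hconj : 1 + v * h = (starRingEnd ℂ) (1 + w * h) := by
    apply Complex.ext <;> simp [hw, hv]
  rw [hconj, Complex.conj_cpow _ _ (Complex.slitPlane_arg_ne_pi hslit), Complex.conj_ofReal,
    Complex.mul_conj] at prod
  have prod' := Complex.ofReal_injective prod
  rw [← prod', Complex.normSq_eq_norm_sq, Complex.norm_cpow_real]
  have hN : ‖1 + w * h‖ = Real.sqrt (1 - 2 * c * h + h ^ 2) := by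
    rw [Complex.norm_def, Complex.normSq_apply]
    congr 1
    simp [hw]
    nlinarith
  rw [← hN, ← Real.rpow_natCast, ← Real.rpow_mul (norm_nonneg _)]
  norm_num
  rw [Real.rpow_neg_one]

lemma laplace_aux (x y : EuclideanSpace ℝ (Fin 3)) (hx : 0 < ‖x‖) (hxy : ‖x‖ < ‖y‖) :
    1 / ‖x - y‖ =
      ∑' n : ℕ, ‖x‖ ^ n / ‖y‖ ^ (n + 1) * legendrePR n (⟪x, y⟫ / (‖x‖ * ‖y‖)) := by
  have hy : 0 < ‖y‖ := hx.trans hxy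
  have g := gen_fun (⟪x, y⟫ / (‖x‖ * ‖y‖)) (‖x‖ / ‖y‖) (abs_real_inner_div_norm_mul_norm_le_one x y)
    (by positivity) ((div_lt_one hy).2 hxy)
  have e : ∀ n : ℕ, ‖x‖ ^ n / ‖y‖ ^ (n + 1) * legendrePR n (⟪x, y⟫ / (‖x‖ * ‖y‖))
      = ‖y‖⁻¹ * ((‖x‖ / ‖y‖) ^ n * legendrePR n (⟪x, y⟫ / (‖x‖ * ‖y‖))) := by
    intro n
    rw [div_pow, pow_succ]
    field_simp
  simp only [e]
  rw [tsum_mul_left, g, ← mul_inv, one_div]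
  congr 1
  have : ‖x - y‖ ^ 2 = ‖y‖ ^ 2 *
      (1 - 2 * (⟪x, y⟫ / (‖x‖ * ‖y‖)) * (‖x‖ / ‖y‖) + (‖x‖ / ‖y‖) ^ 2) := by
    rw [norm_sub_sq_real]
    field_simp
    ring
  rw [← Real.sqrt_sq (norm_nonneg (x - y)), this, Real.sqrt_mul (by positivity),
    Real.sqrt_sq hy.le]

/-- Laplace's expansion on `ℝ³`. -/
theorem laplace_expansion_R3
    (x x' : EuclideanSpace ℝ (Fin 3))
    (hr : 0 < ‖x‖) (hr' : 0 < ‖x'‖) (hne : ‖x‖ ≠ ‖x'‖) :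
    1 / ‖x - x'‖ =
      ∑' n : ℕ,
        (min ‖x‖ ‖x'‖) ^ n / (max ‖x‖ ‖x'‖) ^ (n + 1) *
          legendrePR n (⟪x, x'⟫ / (‖x‖ * ‖x'‖)) := by
  rcases lt_or_gt_of_ne hne with h | h
  · rw [min_eq_left h.le, max_eq_right h.le]
    exact laplace_aux x x' hr h
  · rw [min_eq_right h.le, max_eq_left h.le, norm_sub_rev, real_inner_comm, mul_comm ‖x‖]
    exact laplace_aux x' x hr' h
end
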